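/- For every τ in the complex upper half-plane, (1 − c(τ) − 2c(τ)²)·η(3τ)·η(6τ) = c(τ)·η(τ/3)·η(2τ/3); equivalently 1/c(τ) − 1 − 2c(τ) = η(τ/3)η(2τ/3)/(η(3τ)η(6τ)). -/

import Mathlib

open Complex

/-- The nome `q = exp(2πiτ)`. -/
noncomputable def nome (τ : ℂ) : ℂ := Complex.exp (2 * Real.pi * I * τ)

/-- Ramanujan's cubic continued fraction, as an infinite product:
`c(τ) = q^{1/3} ∏_{n≥1} (1-q^{6n-1})(1-q^{6n-5})/(1-q^{6n-3})²`. -/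
noncomputable def c (τ : ℂ) : ℂ :=
  Complex.exp (2 * Real.pi * I * τ / 3) *
    ∏' n : ℕ,
      ((1 - nome τ ^ (6 * (n + 1) - 1)) * (1 - nome τ ^ (6 * (n + 1) - 5)) /
        (1 - nome τ ^ (6 * (n + 1) - 3)) ^ 2)

/-- The Dedekind eta function `η(τ) = e^{πiτ/12} ∏_{n≥1} (1 - e^{2πinτ})`. -/
noncomputable def dedekindEta (τ : ℂ) : ℂ :=
  Complex.exp (Real.pi * I * τ / 12) *
    ∏' n : ℕ, (1 - Complex.exp (2 * Real.pi * I * (n + 1) * τ))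

/-- `α(τ) = 3 + 27 η(9τ)³/η(τ)³`. -/
noncomputable def alpha (τ : ℂ) : ℂ :=
  3 + 27 * dedekindEta (9 * τ) ^ 3 / dedekindEta τ ^ 3

/-- `β(τ) = 3 + η(τ/3)³/η(3τ)³`. -/
noncomputable def beta (τ : ℂ) : ℂ :=
  3 + dedekindEta (τ / 3) ^ 3 / dedekindEta (3 * τ) ^ 3

/-!
Write `x = q^{1/3}` and `c = xv`. Both factors of `1 - c - 2c² = (1 - 2xv)(1 + xv)` come from
3-dissections of Ramanujan's theta functions
`φ(-x) = ∏ (1 - xⁿ)(1 - x^{2n-1})` and `ψ(x) = ∏ (1 - x^{2n})(1 + xⁿ)`: sorting the terms of the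
theta series given by Jacobi's triple product according to their index modulo 3 yields
`φ(-x) = (1 - 2xv) φ(-x⁹)` and `v ψ(x) = (1 + xv) ψ(x⁹)`.
Multiply the two and use `φ(-x) ψ(x) = ∏ (1 - xⁿ)(1 - x^{2n})`.
-/

namespace QSeries

open Filter Topology

/-! ### The infinite `q`-Pochhammer symbol -/

/-- The infinite `q`-Pochhammer symbol `(a; q)_∞ = ∏_{n≥0} (1 - a qⁿ)`, meaningful when the product
converges, in particular for `‖q‖ < 1` in a complete normed field. -/
noncomputable def qPoch {R : Type*} [CommRing R] [TopologicalSpace R] (a q : R) : R :=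
  ∏' n : ℕ, (1 - a * q ^ n)

section NormedField

variable {𝕜 : Type*} [NormedField 𝕜] {q : 𝕜}

theorem norm_pow_lt_one (hq : ‖q‖ < 1) {n : ℕ} (hn : n ≠ 0) : ‖q ^ n‖ < 1 :=
  (norm_pow q n).trans_lt (pow_lt_one₀ (norm_nonneg q) hq hn)

theorem summable_norm_mul_pow (a : 𝕜) (hq : ‖q‖ < 1) : Summable fun n : ℕ ↦ ‖-(a * q ^ n)‖ := by
  simpa using (summable_geometric_of_lt_one (norm_nonneg q) hq).mul_left ‖a‖

variable [CompleteSpace 𝕜]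

theorem multipliable_qPoch (a : 𝕜) (hq : ‖q‖ < 1) : Multipliable fun n : ℕ ↦ 1 - a * q ^ n := by
  simpa only [sub_eq_add_neg] using multipliable_one_add_of_summable (summable_norm_mul_pow a hq)

theorem hasProd_qPoch (a : 𝕜) (hq : ‖q‖ < 1) :
    HasProd (fun n : ℕ ↦ 1 - a * q ^ n) (qPoch a q) :=
  (multipliable_qPoch a hq).hasProd

theorem qPoch_ne_zero {a : 𝕜} (ha : ‖a‖ < 1) (hq : ‖q‖ < 1) : qPoch a q ≠ 0 := by
  have hfactor (n : ℕ) : 1 - a * q ^ n ≠ 0 := by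
    refine (isUnit_one_sub_of_norm_lt_one ?_).ne_zero
    rw [norm_mul, norm_pow]
    exact mul_lt_one_of_nonneg_of_lt_one_left (norm_nonneg a) ha
      (pow_le_one₀ (norm_nonneg q) hq.le)
  simp only [sub_eq_add_neg] at hfactor
  simpa only [qPoch, sub_eq_add_neg] using
    tprod_one_add_ne_zero_of_summable hfactor (summable_norm_mul_pow a hq)

theorem qPoch_eq_one_sub_mul (a : 𝕜) (hq : ‖q‖ < 1) :
    qPoch a q = (1 - a) * qPoch (a * q) q := by
  have htail : Multipliable fun n : ℕ ↦ 1 - a * q ^ (n + 1) := by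
    simpa only [pow_succ', mul_assoc] using multipliable_qPoch (a * q) hq
  simpa only [qPoch, pow_zero, mul_one, pow_succ', mul_assoc] using
    tprod_eq_zero_mul' (f := fun n : ℕ ↦ 1 - a * q ^ n) htail

theorem qPoch_mul_qPoch_neg (a : 𝕜) (hq : ‖q‖ < 1) :
    qPoch a q * qPoch (-a) q = qPoch (a ^ 2) (q ^ 2) := by
  rw [qPoch, qPoch, ← (multipliable_qPoch a hq).tprod_mul (multipliable_qPoch (-a) hq), qPoch]
  congr 1 with n
  ring

theorem qPoch_eq_prod_qPoch_pow (a : 𝕜) (hq : ‖q‖ < 1) (N : ℕ) [NeZero N] :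
    qPoch a q = ∏ j : Fin N, qPoch (a * q ^ (j : ℕ)) (q ^ N) := by
  have hmod := (Nat.divModEquiv N).symm.multipliable_iff.mpr (multipliable_qPoch a hq)
  rw [qPoch, ← (Nat.divModEquiv N).symm.tprod_eq]
  refine (hmod.tprod_prod' fun _ ↦ (hasProd_fintype _).multipliable).trans ?_
  simp_rw [qPoch, tprod_fintype]
  rw [← Multipliable.tprod_finsetProd fun j _ ↦
    multipliable_qPoch _ (norm_pow_lt_one hq (NeZero.ne N))]
  congr! 3 with m j
  simp only [Function.comp_apply, Nat.divModEquiv_symm_apply]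
  ring

theorem qPoch_eq_mul_two (a : 𝕜) (hq : ‖q‖ < 1) :
    qPoch a q = qPoch a (q ^ 2) * qPoch (a * q) (q ^ 2) := by
  simpa [Fin.prod_univ_two] using qPoch_eq_prod_qPoch_pow a hq 2

theorem qPoch_eq_mul_three (a : 𝕜) (hq : ‖q‖ < 1) :
    qPoch a q = qPoch a (q ^ 3) * qPoch (a * q) (q ^ 3) * qPoch (a * q ^ 2) (q ^ 3) := by
  simpa [Fin.prod_univ_three] using qPoch_eq_prod_qPoch_pow a hq 3

/-- Euler: the partitions of `n` into odd parts are as many as those into distinct parts. -/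
theorem qPoch_sq_mul_qPoch_neg (hq : ‖q‖ < 1) : qPoch q (q ^ 2) * qPoch (-q) q = 1 := by
  have hq2 := norm_pow_lt_one hq two_ne_zero
  have hsplit := qPoch_eq_mul_two q hq
  rw [← sq] at hsplit
  apply mul_right_cancel₀ (qPoch_ne_zero hq2 hq2)
  linear_combination qPoch_mul_qPoch_neg q hq - qPoch (-q) q * hsplit

end NormedField

/-! ### Jacobi's triple product -/

/-- The general term `(-a)ᵏ q^{k(k-1)/2}` of the theta series in Jacobi's triple product identity.
The integer division in the exponent is exact. -/
def thetaTerm {𝕜 : Type*} [Field 𝕜] (a q : 𝕜) (k : ℤ) : 𝕜 := (-a) ^ k * q ^ (k * (k - 1) / 2)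

/-- The theta function `(a; q)_∞ (q/a; q)_∞ (q; q)_∞`, the product side of Jacobi's triple product
identity. In Ramanujan's notation, `φ(-q) = theta q (q ^ 2)` and `2 ψ(q) = theta (-1) q`. -/
noncomputable def theta {𝕜 : Type*} [Field 𝕜] [TopologicalSpace 𝕜] (a q : 𝕜) : 𝕜 :=
  qPoch a q * qPoch (q / a) q * qPoch q q

/-- The finite `q`-Pochhammer symbol `(q; q)_m = ∏_{i=1}^m (1 - qⁱ)`. -/
def qFact {R : Type*} [CommRing R] (q : R) (m : ℕ) : R := ∏ i ∈ Finset.range m, (1 - q ^ (i + 1))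

/-- The reciprocal of `(q; q)_m`, extended by zero to negative `m`; the extension is the one that
preserves the recurrence `1 / (q; q)_{m-1} = (1 - qᵐ) / (q; q)_m`. -/
def qFactInv {𝕜 : Type*} [Field 𝕜] (q : 𝕜) (m : ℤ) : 𝕜 :=
  if m < 0 then 0 else (qFact q m.toNat)⁻¹

/-- The Gaussian binomial coefficient of `2n` over `n + k`, the coefficient of the finite form of
Jacobi's triple product. It is defined for all `k : ℤ` and vanishes for `|k| > n`. -/
def centralQBinom {𝕜 : Type*} [Field 𝕜] (q : 𝕜) (n : ℕ) (k : ℤ) : 𝕜 :=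
  qFact q (2 * n) * qFactInv q (n - k) * qFactInv q (n + k)

section Field

variable {𝕜 : Type*} [Field 𝕜] {a q : 𝕜}

@[simp] theorem thetaTerm_zero (a q : 𝕜) : thetaTerm a q 0 = 1 := by simp [thetaTerm]

@[simp] theorem thetaTerm_one (a q : 𝕜) : thetaTerm a q 1 = -a := by simp [thetaTerm]

theorem thetaTerm_ne_zero (ha : a ≠ 0) (hq : q ≠ 0) (k : ℤ) : thetaTerm a q k ≠ 0 :=
  mul_ne_zero (zpow_ne_zero _ (neg_ne_zero.mpr ha)) (zpow_ne_zero _ hq)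

theorem two_mul_mul_pred_ediv_two (k : ℤ) : 2 * (k * (k - 1) / 2) = k * (k - 1) :=
  Int.two_mul_ediv_two_of_even (Int.even_mul_pred_self k)

theorem thetaTerm_add (ha : a ≠ 0) (hq : q ≠ 0) (m n : ℤ) :
    thetaTerm a q (m + n) = q ^ (m * n) * thetaTerm a q m * thetaTerm a q n := by
  have hexp : (m + n) * (m + n - 1) / 2 = m * n + m * (m - 1) / 2 + n * (n - 1) / 2 := by
    linarith [two_mul_mul_pred_ediv_two m, two_mul_mul_pred_ediv_two n,
      two_mul_mul_pred_ediv_two (m + n)]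
  simp only [thetaTerm]
  rw [hexp, zpow_add₀ (neg_ne_zero.mpr ha), zpow_add₀ hq, zpow_add₀ hq]
  ring

theorem thetaTerm_add_one (ha : a ≠ 0) (hq : q ≠ 0) (k : ℤ) :
    thetaTerm a q (k + 1) = -a * q ^ k * thetaTerm a q k := by
  rw [thetaTerm_add ha hq, thetaTerm_one, mul_one]
  ring

theorem thetaTerm_one_sub (ha : a ≠ 0) (q : 𝕜) (k : ℤ) :
    thetaTerm a q (1 - k) = -a * thetaTerm a⁻¹ q k := by
  rw [thetaTerm, thetaTerm, zpow_sub₀ (neg_ne_zero.mpr ha), zpow_one, ← inv_neg, inv_zpow,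
    show (1 - k) * (1 - k - 1) = k * (k - 1) by ring]
  ring

theorem thetaTerm_natCast_mul (hq : q ≠ 0) (a : 𝕜) (N : ℕ) (m : ℤ) :
    thetaTerm a q (N * m) = thetaTerm (-thetaTerm a q N) (q ^ (N ^ 2)) m := by
  have hexp : N * m * (N * m - 1) / 2 =
      (N * (N - 1) / 2 : ℤ) * m + (N : ℤ) ^ 2 * (m * (m - 1) / 2) := by
    apply mul_left_cancel₀ (two_ne_zero' ℤ)
    linear_combination two_mul_mul_pred_ediv_two (N * m) - m * two_mul_mul_pred_ediv_two N -
      N ^ 2 * two_mul_mul_pred_ediv_two m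
  simp only [thetaTerm, neg_neg, mul_zpow, ← zpow_mul, ← zpow_natCast]
  rw [hexp, zpow_add₀ hq]
  push_cast
  ring

theorem thetaTerm_mul_left (a b q : 𝕜) (k : ℤ) :
    thetaTerm (a * b) q k = b ^ k * thetaTerm a q k := by
  rw [thetaTerm, thetaTerm, ← neg_mul, mul_zpow]
  ring

theorem thetaTerm_mul_add_natCast (ha : a ≠ 0) (hq : q ≠ 0) (N j : ℕ) (m : ℤ) :
    thetaTerm a q (m * N + j) =
      thetaTerm a q j * thetaTerm (-thetaTerm a q N * q ^ (N * j)) (q ^ N ^ 2) m := by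
  rw [thetaTerm_add ha hq, mul_comm m, thetaTerm_natCast_mul hq, thetaTerm_mul_left,
    ← zpow_natCast q (N * j), ← zpow_mul, Nat.cast_mul, mul_right_comm (N : ℤ)]
  ring

theorem theta_div_left [TopologicalSpace 𝕜] (hq0 : q ≠ 0) (a : 𝕜) :
    theta (q / a) q = theta a q := by
  rw [theta, theta, div_div_cancel₀ hq0, mul_comm (qPoch _ _)]

theorem qFact_succ (q : 𝕜) (m : ℕ) : qFact q (m + 1) = qFact q m * (1 - q ^ (m + 1)) :=
  Finset.prod_range_succ _ _

theorem qFactInv_of_neg {m : ℤ} (hm : m < 0) (q : 𝕜) : qFactInv q m = 0 := if_pos hm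

theorem qFactInv_natCast (q : 𝕜) (m : ℕ) : qFactInv q m = (qFact q m)⁻¹ := by
  simp [qFactInv]

theorem qFactInv_sub_one (hq : ¬IsOfFinOrder q) (m : ℤ) :
    qFactInv q (m - 1) = (1 - q ^ m) * qFactInv q m := by
  rcases lt_trichotomy m 0 with hm | rfl | hm
  · rw [qFactInv_of_neg hm, qFactInv_of_neg (by lia), mul_zero]
  · simp [qFactInv]
  · obtain ⟨n, rfl⟩ : ∃ n : ℕ, m = (n + 1 : ℕ) := ⟨(m - 1).toNat, by lia⟩
    have hne : 1 - q ^ (n + 1) ≠ 0 := fun h ↦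
      hq (isOfFinOrder_iff_pow_eq_one.mpr ⟨n + 1, n.succ_pos, (sub_eq_zero.mp h).symm⟩)
    rw [qFactInv_natCast, qFact_succ, zpow_natCast, Nat.cast_succ, add_sub_cancel_right,
      qFactInv_natCast]
    field_simp

/-- Two steps of the `q`-Pascal rule. -/
theorem centralQBinom_succ (hq0 : q ≠ 0) (hq : ¬IsOfFinOrder q) (n : ℕ) (k : ℤ) :
    centralQBinom q (n + 1) k = (1 + q ^ (2 * n + 1)) * centralQBinom q n k +
      q ^ (n + 1 - k) * centralQBinom q n (k - 1) +
        q ^ (n + 1 + k) * centralQBinom q n (k + 1) := by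
  have hfact : qFact q (2 * (n + 1)) =
      qFact q (2 * n) * (1 - q ^ (2 * n + 1)) * (1 - q ^ (2 * n + 2)) := by
    rw [mul_add_one, qFact_succ, qFact_succ]
  have hsub : qFactInv q (n - k) = (1 - q ^ (n + 1 - k)) * qFactInv q (n + 1 - k) := by
    rw [← qFactInv_sub_one hq]; congr 1; ring
  have hadd : qFactInv q (n + k) = (1 - q ^ (n + 1 + k)) * qFactInv q (n + 1 + k) := by
    rw [← qFactInv_sub_one hq]; congr 1; ring
  have hsub' : qFactInv q (n - (k + 1)) = (1 - q ^ (n - k)) * qFactInv q (n - k) := by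
    rw [← qFactInv_sub_one hq]; congr 1; ring
  have hadd' : qFactInv q (n + (k - 1)) = (1 - q ^ (n + k)) * qFactInv q (n + k) := by
    rw [← qFactInv_sub_one hq]; congr 1; ring
  simp only [centralQBinom, Nat.cast_succ, hfact]
  rw [hsub', hadd', hsub, hadd, show n - (k - 1) = n + 1 - k by ring,
    show n + (k + 1) = n + 1 + k by ring]
  simp only [zpow_sub₀ hq0, zpow_add₀ hq0, zpow_natCast, zpow_one]
  field_simp
  ring

theorem centralQBinom_zero (q : 𝕜) (k : ℤ) : centralQBinom q 0 k = if k = 0 then 1 else 0 := by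
  rcases lt_trichotomy k 0 with hk | rfl | hk
  · simp [centralQBinom, qFactInv_of_neg, hk, hk.ne]
  · simp [centralQBinom, qFactInv, qFact]
  · simp [centralQBinom, qFactInv_of_neg, hk, hk.ne']

/-- Finite form of **Jacobi's triple product identity**. -/
theorem hasSum_centralQBinom_mul_thetaTerm [TopologicalSpace 𝕜] [IsTopologicalRing 𝕜] (ha : a ≠ 0)
    (hq0 : q ≠ 0) (hq : ¬IsOfFinOrder q) (n : ℕ) :
    HasSum (fun k : ℤ ↦ centralQBinom q n k * thetaTerm a q k)
      (∏ i ∈ Finset.range n, (1 - a * q ^ i) * (1 - q / a * q ^ i)) := by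
  induction n with
  | zero =>
    have hsingle := hasSum_single (f := fun k : ℤ ↦ centralQBinom q 0 k * thetaTerm a q k) 0
      fun k hk ↦ by rw [centralQBinom_zero, if_neg hk, zero_mul]
    simpa [centralQBinom_zero] using hsingle
  | succ n ih =>
    set f : ℤ → 𝕜 := fun k ↦ centralQBinom q n k * thetaTerm a q k with hf
    have hrec (k : ℤ) : centralQBinom q (n + 1) k * thetaTerm a q k =
        (1 + q ^ (2 * n + 1)) * f k + -a * q ^ n * f (k - 1) + -(q / a) * q ^ n * f (k + 1) := by
      have hprev := thetaTerm_add_one ha hq0 (k - 1)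
      rw [sub_add_cancel] at hprev
      simp only [hf, centralQBinom_succ hq0 hq, thetaTerm_add_one ha hq0 k, hprev,
        zpow_sub₀ hq0, zpow_add₀ hq0, zpow_natCast, zpow_one]
      field_simp
      ring
    have hprod (P : 𝕜) : P * ((1 - a * q ^ n) * (1 - q / a * q ^ n)) =
        (1 + q ^ (2 * n + 1)) * P + -a * q ^ n * P + -(q / a) * q ^ n * P := by
      field_simp
      ring
    rw [Finset.prod_range_succ, hprod]
    simp only [hrec]
    exact ((ih.mul_left _).add (((Equiv.subRight (1 : ℤ)).hasSum_iff.mpr ih).mul_left _)).add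
      (((Equiv.addRight (1 : ℤ)).hasSum_iff.mpr ih).mul_left _)

end Field

section NormedField

variable {𝕜 : Type*} [NormedField 𝕜] {a q : 𝕜}

theorem not_isOfFinOrder_of_norm_lt_one (hq : ‖q‖ < 1) : ¬IsOfFinOrder q :=
  fun h ↦ hq.ne h.norm_eq_one

theorem summable_norm_thetaTerm_natCast (ha : a ≠ 0) (hq0 : q ≠ 0) (hq : ‖q‖ < 1) :
    Summable fun n : ℕ ↦ ‖thetaTerm a q n‖ := by
  have hne (n : ℕ) : ‖thetaTerm a q n‖ ≠ 0 :=
    norm_ne_zero_iff.mpr (thetaTerm_ne_zero ha hq0 n)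
  refine summable_of_ratio_test_tendsto_lt_one zero_lt_one (.of_forall hne) ?_
  have hratio (n : ℕ) : ‖thetaTerm a q (n + 1 : ℕ)‖ / ‖thetaTerm a q n‖ = ‖a‖ * ‖q‖ ^ n := by
    rw [Nat.cast_succ, thetaTerm_add_one ha hq0, norm_mul, mul_div_cancel_right₀ _ (hne n),
      norm_mul, norm_neg, zpow_natCast, norm_pow]
  simp only [norm_norm, hratio]
  simpa using (tendsto_pow_atTop_nhds_zero_of_lt_one (norm_nonneg q) hq).const_mul ‖a‖

theorem summable_norm_thetaTerm (ha : a ≠ 0) (hq0 : q ≠ 0) (hq : ‖q‖ < 1) :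
    Summable fun k : ℤ ↦ ‖thetaTerm a q k‖ := by
  refine .of_nat_of_neg_add_one (summable_norm_thetaTerm_natCast ha hq0 hq) ?_
  have hreflect (n : ℕ) :
      ‖thetaTerm a q (-(n + 1))‖ = ‖a‖ * ‖thetaTerm a⁻¹ q (n + 2 : ℕ)‖ := by
    rw [← norm_neg a, ← norm_mul, ← thetaTerm_one_sub ha,
      show (1 - (n + 2 : ℕ) : ℤ) = -(n + 1) by push_cast; ring]
  simp only [hreflect]
  exact ((summable_nat_add_iff (f := fun n : ℕ ↦ ‖thetaTerm a⁻¹ q n‖) 2).mpr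
    (summable_norm_thetaTerm_natCast (inv_ne_zero ha) hq0 hq)).mul_left ‖a‖

variable [CompleteSpace 𝕜]

theorem tendsto_qFact (hq : ‖q‖ < 1) : Tendsto (qFact q) atTop (𝓝 (qPoch q q)) := by
  refine (hasProd_qPoch q hq).tendsto_prod_nat.congr fun m ↦ ?_
  simp only [qFact, pow_succ']

theorem tendsto_inv_qFact (hq : ‖q‖ < 1) :
    Tendsto (fun m ↦ (qFact q m)⁻¹) atTop (𝓝 (qPoch q q)⁻¹) :=
  (tendsto_qFact hq).inv₀ (qPoch_ne_zero hq hq)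

theorem tendsto_qFactInv (hq : ‖q‖ < 1) : Tendsto (qFactInv q) atTop (𝓝 (qPoch q q)⁻¹) := by
  have htoNat : Tendsto Int.toNat atTop atTop := tendsto_atTop.mpr fun b ↦ by
    filter_upwards [eventually_ge_atTop (b : ℤ)] with m hm
    lia
  refine ((tendsto_inv_qFact hq).comp htoNat).congr' ?_
  filter_upwards [eventually_ge_atTop 0] with m hm
  rw [qFactInv, if_neg hm.not_gt, Function.comp_apply]

theorem exists_norm_qFactInv_le (hq : ‖q‖ < 1) : ∃ C, ∀ m, ‖qFactInv q m‖ ≤ C := by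
  obtain ⟨C, hC⟩ :=
    (Metric.isBounded_range_of_tendsto _ (tendsto_inv_qFact hq)).exists_norm_le
  refine ⟨C, fun m ↦ ?_⟩
  rw [qFactInv]
  split_ifs
  · exact norm_zero.trans_le ((norm_nonneg _).trans (hC _ ⟨0, rfl⟩))
  · exact hC _ ⟨_, rfl⟩

theorem tendsto_centralQBinom (hq : ‖q‖ < 1) (k : ℤ) :
    Tendsto (fun n ↦ centralQBinom q n k) atTop (𝓝 (qPoch q q)⁻¹) := by
  have hfact := (tendsto_qFact hq).comp (tendsto_id.const_mul_atTop' (r := 2) two_pos)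
  have hsub := (tendsto_qFactInv hq).comp
    (tendsto_atTop_add_const_right _ (-k) tendsto_natCast_atTop_atTop)
  have hadd := (tendsto_qFactInv hq).comp
    (tendsto_atTop_add_const_right _ k tendsto_natCast_atTop_atTop)
  have hmul := (hfact.mul hsub).mul hadd
  rwa [mul_inv_cancel₀ (qPoch_ne_zero hq hq), one_mul] at hmul

theorem exists_norm_centralQBinom_le (hq : ‖q‖ < 1) :
    ∃ C, ∀ n k, ‖centralQBinom q n k‖ ≤ C := by
  obtain ⟨C, hC⟩ := (Metric.isBounded_range_of_tendsto _ (tendsto_qFact hq)).exists_norm_le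
  obtain ⟨D, hD⟩ := exists_norm_qFactInv_le hq
  refine ⟨C * D * D, fun n k ↦ ?_⟩
  have hC0 : 0 ≤ C := (norm_nonneg _).trans (hC _ ⟨0, rfl⟩)
  have hD0 : 0 ≤ D := (norm_nonneg _).trans (hD 0)
  rw [centralQBinom, norm_mul, norm_mul]
  gcongr
  exacts [hC _ ⟨_, rfl⟩, hD _, hD _]

/-- **Jacobi's triple product identity**. -/
theorem tsum_thetaTerm (ha : a ≠ 0) (hq0 : q ≠ 0) (hq : ‖q‖ < 1) :
    ∑' k, thetaTerm a q k = theta a q := by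
  obtain ⟨C, hC⟩ := exists_norm_centralQBinom_le hq
  have hsum : Tendsto (fun n ↦ ∑' k, centralQBinom q n k * thetaTerm a q k) atTop
      (𝓝 (∑' k, (qPoch q q)⁻¹ * thetaTerm a q k)) := by
    refine tendsto_tsum_of_dominated_convergence
      ((summable_norm_thetaTerm ha hq0 hq).mul_left C)
      (fun k ↦ (tendsto_centralQBinom hq k).mul_const _) (.of_forall fun n k ↦ ?_)
    rw [norm_mul]
    gcongr
    exact hC n k
  have hprod : Tendsto (fun n ↦ ∑' k, centralQBinom q n k * thetaTerm a q k) atTop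
      (𝓝 (qPoch a q * qPoch (q / a) q)) := by
    simp only [(hasSum_centralQBinom_mul_thetaTerm ha hq0
      (not_isOfFinOrder_of_norm_lt_one hq) _).tsum_eq]
    exact ((hasProd_qPoch a hq).mul (hasProd_qPoch (q / a) hq)).tendsto_prod_nat
  rw [theta, ← tendsto_nhds_unique hsum hprod, tsum_mul_left, mul_right_comm,
    inv_mul_cancel₀ (qPoch_ne_zero hq hq), one_mul]

/-! ### Dissections of theta functions -/

theorem theta_mul_right (ha : a ≠ 0) (hq0 : q ≠ 0) (hq : ‖q‖ < 1) :
    theta (a * q) q = -theta a q / a := by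
  have hinv : q / (a * q) = a⁻¹ := by field_simp
  rw [theta, theta, hinv, qPoch_eq_one_sub_mul a hq, qPoch_eq_one_sub_mul a⁻¹ hq,
    inv_mul_eq_div]
  field_simp
  ring

theorem tsum_int_eq_sum_tsum_mul_add {E : Type*} [AddCommGroup E] [UniformSpace E]
    [IsUniformAddGroup E] [CompleteSpace E] [T2Space E] {f : ℤ → E} (hf : Summable f) (N : ℕ)
    [NeZero N] :
    ∑' k, f k = ∑ j : Fin N, ∑' m : ℤ, f (m * N + j) := by
  have hpair : Summable fun p : ℤ × Fin N ↦ f (p.1 * N + p.2) :=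
    (Int.divModEquiv N).symm.summable_iff.mpr hf
  calc ∑' k, f k = ∑' p : ℤ × Fin N, f (p.1 * N + p.2) := ((Int.divModEquiv N).symm.tsum_eq f).symm
    _ = ∑' m : ℤ, ∑ j : Fin N, f (m * N + j) := by
      rw [hpair.tsum_prod' fun _ ↦ (hasSum_fintype _).summable]
      simp only [tsum_fintype]
    _ = ∑ j : Fin N, ∑' m : ℤ, f (m * N + j) :=
      Summable.tsum_finsetSum fun j _ ↦
        hpair.comp_injective (i := fun m ↦ (m, j)) (Prod.mk_left_injective j)

theorem theta_eq_sum_thetaTerm_mul_theta (ha : a ≠ 0) (hq0 : q ≠ 0) (hq : ‖q‖ < 1) (N : ℕ)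
    [NeZero N] :
    theta a q = ∑ j : Fin N,
      thetaTerm a q j * theta (-thetaTerm a q N * q ^ (N * (j : ℕ))) (q ^ N ^ 2) := by
  have hN2 : N ^ 2 ≠ 0 := pow_ne_zero 2 (NeZero.ne N)
  rw [← tsum_thetaTerm ha hq0 hq,
    tsum_int_eq_sum_tsum_mul_add (summable_norm_thetaTerm ha hq0 hq).of_norm N]
  refine Finset.sum_congr rfl fun j _ ↦ ?_
  have hne : -thetaTerm a q N * q ^ (N * (j : ℕ)) ≠ 0 :=
    mul_ne_zero (neg_ne_zero.mpr (thetaTerm_ne_zero ha hq0 N)) (pow_ne_zero _ hq0)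
  simp only [thetaTerm_mul_add_natCast ha hq0]
  rw [tsum_mul_left, tsum_thetaTerm hne (pow_ne_zero _ hq0) (norm_pow_lt_one hq hN2)]

theorem theta_three_dissection (ha : a ≠ 0) (hq0 : q ≠ 0) (hq : ‖q‖ < 1) :
    theta a q = theta (a ^ 3 * q ^ 3) (q ^ 9) - a * theta (a ^ 3 * q ^ 6) (q ^ 9) -
      q / a * theta (a ^ 3) (q ^ 9) := by
  have htwo : thetaTerm a q 2 = a ^ 2 * q := by simp [thetaTerm]
  have hthree : thetaTerm a q 3 = -(a ^ 3 * q ^ 3) := by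
    rw [← two_add_one_eq_three, thetaTerm_add_one ha hq0, htwo, zpow_ofNat]
    ring
  have hshift := theta_mul_right (pow_ne_zero 3 ha) (pow_ne_zero 9 hq0)
    (norm_pow_lt_one hq (by lia : 9 ≠ 0))
  rw [theta_eq_sum_thetaTerm_mul_theta ha hq0 hq 3, Fin.sum_univ_three]
  simp only [Fin.coe_ofNat_eq_mod, Nat.reduceMod, Nat.reducePow, Nat.reduceMul, Nat.cast_ofNat,
    Nat.cast_zero, Nat.cast_one, thetaTerm_zero, thetaTerm_one, htwo, hthree, neg_neg, mul_zero,
    pow_zero, mul_one, one_mul, mul_assoc, ← pow_add, Nat.reduceAdd, hshift]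
  field_simp
  ring

theorem theta_self_sq_three_dissection (hq0 : q ≠ 0) (hq : ‖q‖ < 1) :
    theta q (q ^ 2) = theta (q ^ 9) (q ^ 18) - 2 * q * theta (q ^ 3) (q ^ 18) := by
  have hdissect :=
    theta_three_dissection hq0 (pow_ne_zero 2 hq0) (norm_pow_lt_one hq two_ne_zero)
  have hdiv : q ^ 18 / q ^ 3 = q ^ 15 := by field_simp
  have hreflect := theta_div_left (pow_ne_zero 18 hq0) (q ^ 3)
  have hqq : q ^ 2 / q = q := by field_simp
  rw [hdiv] at hreflect
  simp only [← pow_mul, ← pow_add, Nat.reduceMul, Nat.reduceAdd, hreflect, hqq] at hdissect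
  linear_combination hdissect

theorem theta_neg_one_three_dissection (hq0 : q ≠ 0) (hq : ‖q‖ < 1) :
    theta (-1) q = 2 * theta (-q ^ 3) (q ^ 9) + q * theta (-1) (q ^ 9) := by
  have hdissect := theta_three_dissection (neg_ne_zero.mpr one_ne_zero) hq0 hq
  have hcube : (-1 : 𝕜) ^ 3 = -1 := by norm_num
  have hdiv : q ^ 9 / -q ^ 3 = -q ^ 6 := by field_simp
  have hreflect := theta_div_left (pow_ne_zero 9 hq0) (-q ^ 3)
  rw [hdiv] at hreflect
  simp only [hcube, neg_one_mul, div_neg, div_one, hreflect] at hdissect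
  linear_combination hdissect

theorem theta_self_sq_mul_theta_neg_one (hq0 : q ≠ 0) (hq : ‖q‖ < 1) :
    theta q (q ^ 2) * theta (-1) q = 2 * (qPoch q q * qPoch (q ^ 2) (q ^ 2)) := by
  have hq2 : q ^ 2 / q = q := by field_simp
  rw [theta, theta, hq2, qPoch_eq_one_sub_mul (-1) hq, div_neg, div_one, neg_one_mul]
  linear_combination 2 * (qPoch q (q ^ 2) * qPoch (-q) q + 1) * qPoch q q *
    qPoch (q ^ 2) (q ^ 2) * qPoch_sq_mul_qPoch_neg hq

/-! ### The cubic continued fraction -/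

/-- The product part `(q; q⁶)_∞ (q⁵; q⁶)_∞ / (q³; q⁶)_∞²` of Ramanujan's cubic continued fraction,
which is `q^{1/3}` times it. -/
noncomputable def cubicProd {𝕜 : Type*} [Field 𝕜] [TopologicalSpace 𝕜] (q : 𝕜) : 𝕜 :=
  qPoch q (q ^ 6) * qPoch (q ^ 5) (q ^ 6) / qPoch (q ^ 3) (q ^ 6) ^ 2

theorem hasProd_cubicProd (hq : ‖q‖ < 1) :
    HasProd (fun n : ℕ ↦ (1 - q ^ (6 * n + 5)) * (1 - q ^ (6 * n + 1)) / (1 - q ^ (6 * n + 3)) ^ 2)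
      (cubicProd q) := by
  have hq6 : ‖q ^ 6‖ < 1 := norm_pow_lt_one hq (by lia)
  have hfactor (k : ℕ) : HasProd (fun n : ℕ ↦ 1 - q ^ (6 * n + k)) (qPoch (q ^ k) (q ^ 6)) := by
    simpa only [← pow_mul, ← pow_add, add_comm k] using hasProd_qPoch (q ^ k) hq6
  have hne : qPoch (q ^ 3) (q ^ 6) ≠ 0 := qPoch_ne_zero (norm_pow_lt_one hq three_ne_zero) hq6
  simpa only [cubicProd, sq, pow_one, mul_comm (qPoch (q ^ 5) _)] using
    ((hfactor 5).mul (hfactor 1)).div₀ ((hfactor 3).mul (hfactor 3)) (mul_ne_zero hne hne)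

theorem theta_self_pow_six (hq0 : q ≠ 0) (hq : ‖q‖ < 1) :
    theta q (q ^ 6) = cubicProd q * theta (q ^ 3) (q ^ 6) := by
  have h5 : q ^ 6 / q = q ^ 5 := by field_simp
  have h3 : q ^ 6 / q ^ 3 = q ^ 3 := by field_simp
  have hne : qPoch (q ^ 3) (q ^ 6) ≠ 0 :=
    qPoch_ne_zero (norm_pow_lt_one hq (by lia)) (norm_pow_lt_one hq (by lia))
  rw [theta, theta, h5, h3, cubicProd]
  field_simp

theorem two_mul_cubicProd_mul_theta_neg_self (hq0 : q ≠ 0) (hq : ‖q‖ < 1) :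
    2 * cubicProd q * theta (-q) (q ^ 3) = theta (-1) (q ^ 3) := by
  have hq3 : ‖q ^ 3‖ < 1 := norm_pow_lt_one hq three_ne_zero
  have hdiv : q ^ 3 / -q = -q ^ 2 := by field_simp
  have hodd := qPoch_eq_mul_three q (norm_pow_lt_one hq two_ne_zero)
  have hneg := qPoch_eq_mul_three (-q) hq
  have heuler := qPoch_sq_mul_qPoch_neg hq
  have heuler3 := qPoch_sq_mul_qPoch_neg hq3
  have hne : qPoch (q ^ 3) (q ^ 6) ≠ 0 :=
    qPoch_ne_zero hq3 (norm_pow_lt_one hq (by lia))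
  rw [← pow_mul, ← pow_mul, ← pow_succ', ← pow_succ'] at hodd
  rw [neg_mul, neg_mul, ← sq, ← pow_succ'] at hneg
  rw [← pow_mul] at heuler3
  simp only [Nat.reduceMul, Nat.reduceAdd] at hodd hneg heuler3
  rw [hodd, hneg] at heuler
  -- Trisecting both products in Euler's identity and cancelling the same identity at `q ^ 3`.
  have hcancel : qPoch q (q ^ 6) * qPoch (q ^ 5) (q ^ 6) *
      (qPoch (-q) (q ^ 3) * qPoch (-q ^ 2) (q ^ 3)) = 1 := by
    rw [← heuler, ← mul_one (_ * _ * _), ← heuler3]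
    ring
  rw [theta, theta, hdiv, qPoch_eq_one_sub_mul (-1) hq3, div_neg, div_one, neg_one_mul,
    cubicProd]
  field_simp
  linear_combination 2 * qPoch (q ^ 3) (q ^ 3) * (hcancel -
    (qPoch (q ^ 3) (q ^ 6) * qPoch (-q ^ 3) (q ^ 3) + 1) * heuler3)

theorem theta_self_sq_eq_one_sub_cubicProd_mul (hq0 : q ≠ 0) (hq : ‖q‖ < 1) :
    theta q (q ^ 2) = (1 - 2 * q * cubicProd (q ^ 3)) * theta (q ^ 9) (q ^ 18) := by
  have hsix := theta_self_pow_six (pow_ne_zero 3 hq0) (norm_pow_lt_one hq three_ne_zero)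
  simp only [← pow_mul, Nat.reduceMul] at hsix
  rw [theta_self_sq_three_dissection hq0 hq, hsix]
  ring

theorem cubicProd_mul_theta_neg_one (hq0 : q ≠ 0) (hq : ‖q‖ < 1) :
    cubicProd (q ^ 3) * theta (-1) q = (1 + q * cubicProd (q ^ 3)) * theta (-1) (q ^ 9) := by
  have hneg := two_mul_cubicProd_mul_theta_neg_self (pow_ne_zero 3 hq0)
    (norm_pow_lt_one hq three_ne_zero)
  simp only [← pow_mul, Nat.reduceMul] at hneg
  rw [theta_neg_one_three_dissection hq0 hq]
  linear_combination hneg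

theorem cubicProd_eta_quotient [NeZero (2 : 𝕜)] (hq0 : q ≠ 0) (hq : ‖q‖ < 1) :
    (1 - q * cubicProd (q ^ 3) - 2 * (q * cubicProd (q ^ 3)) ^ 2) *
      (qPoch (q ^ 9) (q ^ 9) * qPoch (q ^ 18) (q ^ 18)) =
    cubicProd (q ^ 3) * (qPoch q q * qPoch (q ^ 2) (q ^ 2)) := by
  have hnine := theta_self_sq_mul_theta_neg_one (pow_ne_zero 9 hq0) (norm_pow_lt_one hq (by lia))
  simp only [← pow_mul, Nat.reduceMul] at hnine
  set v := cubicProd (q ^ 3)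
  apply mul_left_cancel₀ (two_ne_zero' 𝕜)
  calc 2 * ((1 - q * v - 2 * (q * v) ^ 2) *
        (qPoch (q ^ 9) (q ^ 9) * qPoch (q ^ 18) (q ^ 18)))
      = (1 - 2 * q * v) * theta (q ^ 9) (q ^ 18) * ((1 + q * v) * theta (-1) (q ^ 9)) := by
        linear_combination -(1 - 2 * q * v) * (1 + q * v) * hnine
    _ = theta q (q ^ 2) * (v * theta (-1) q) := by
        rw [theta_self_sq_eq_one_sub_cubicProd_mul hq0 hq, cubicProd_mul_theta_neg_one hq0 hq]
    _ = 2 * (v * (qPoch q q * qPoch (q ^ 2) (q ^ 2))) := by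
        linear_combination v * theta_self_sq_mul_theta_neg_one hq0 hq

end NormedField

end QSeries

open QSeries

theorem dedekindEta_eq_exp_mul_qPoch (τ : ℂ) :
    dedekindEta τ = Complex.exp (Real.pi * I * τ / 12) * qPoch (nome τ) (nome τ) := by
  rw [dedekindEta, qPoch]
  congr! 3 with n
  rw [nome, ← pow_succ', ← Complex.exp_nat_mul]
  congr 2
  push_cast
  ring

theorem nome_natCast_mul (n : ℕ) (τ : ℂ) : nome (n * τ) = nome τ ^ n := by
  rw [nome, nome, ← Complex.exp_nat_mul]
  congr 1
  ring

theorem dedekindEta_mul_dedekindEta_two_mul (τ : ℂ) :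
    dedekindEta τ * dedekindEta (2 * τ) = Complex.exp (Real.pi * I * τ / 4) *
      (qPoch (nome τ) (nome τ) * qPoch (nome τ ^ 2) (nome τ ^ 2)) := by
  have hexp : Complex.exp (Real.pi * I * τ / 4) =
      Complex.exp (Real.pi * I * τ / 12) * Complex.exp (Real.pi * I * (2 * τ) / 12) := by
    rw [← Complex.exp_add]
    ring_nf
  have hnome : nome (2 * τ) = nome τ ^ 2 := nome_natCast_mul 2 τ
  rw [dedekindEta_eq_exp_mul_qPoch, dedekindEta_eq_exp_mul_qPoch, hnome, hexp, mul_mul_mul_comm]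

theorem norm_nome_lt_one {τ : ℂ} (hτ : 0 < τ.im) : ‖nome τ‖ < 1 :=
  UpperHalfPlane.norm_exp_two_pi_I_lt_one ⟨τ, hτ⟩

theorem c_three_mul {τ : ℂ} (hτ : 0 < τ.im) :
    c (3 * τ) = nome τ * cubicProd (nome τ ^ 3) := by
  have hthree : nome (3 * τ) = nome τ ^ 3 := nome_natCast_mul 3 τ
  have hexp : Complex.exp (2 * Real.pi * I * (3 * τ) / 3) = nome τ := by
    rw [nome]
    ring_nf
  have hnorm := norm_pow_lt_one (norm_nome_lt_one hτ) three_ne_zero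
  rw [c, hexp, hthree, ← (hasProd_cubicProd hnorm).tprod_eq]
  -- `6 * (n + 1) - 1` reduces to `6 * n + 5`, and similarly for the other exponents.
  rfl

/-- For `τ` in the upper half-plane,
`(1 − c(τ) − 2c(τ)²)·η(3τ)·η(6τ) = c(τ)·η(τ/3)·η(2τ/3)`. -/
theorem cubicCF_eta_quotient (τ : ℂ) (hτ : 0 < τ.im) :
    (1 - c τ - 2 * c τ ^ 2) * dedekindEta (3 * τ) * dedekindEta (6 * τ) =
      c τ * dedekindEta (τ / 3) * dedekindEta (2 * τ / 3) := by
  obtain ⟨σ, rfl⟩ : ∃ σ, τ = 3 * σ := ⟨τ / 3, by ring⟩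
  have hσ : 0 < σ.im := by simpa using hτ
  have hnine : nome (9 * σ) = nome σ ^ 9 := nome_natCast_mul 9 σ
  have hexp : Complex.exp (Real.pi * I * (9 * σ) / 4) =
      nome σ * Complex.exp (Real.pi * I * σ / 4) := by
    rw [nome, ← Complex.exp_add]
    ring_nf
  have heta := dedekindEta_mul_dedekindEta_two_mul σ
  have heta9 := dedekindEta_mul_dedekindEta_two_mul (9 * σ)
  rw [hnine, hexp, ← pow_mul] at heta9
  have hmain := cubicProd_eta_quotient (q := nome σ) (Complex.exp_ne_zero _) (norm_nome_lt_one hσ)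
  rw [show 3 * (3 * σ) = 9 * σ by ring, show 6 * (3 * σ) = 2 * (9 * σ) by ring,
    show 3 * σ / 3 = σ by ring, show 2 * (3 * σ) / 3 = 2 * σ by ring, c_three_mul hσ,
    mul_assoc, mul_assoc, heta, heta9]
  linear_combination nome σ * Complex.exp (Real.pi * I * σ / 4) * hmain
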